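/- Let ν > 0 and let h : [0,∞) × ℝ → ℝ be smooth, 2π-periodic in x, even in x (h(t,−x) = h(t,x)), with ∫_{−π}^{π} h(0,x) dx = 0, and a classical solution of ∂_t h = ∂_x((∂_x h)³ − ∂_x h) − ν ∂_x⁴ h on [0,∞) × ℝ. Then limsup_{t → ∞} sup_{x ∈ ℝ} |∂_x h(t,x)| ≤ 1. -/

import Mathlib

open Real MeasureTheory Set Filter

noncomputable section

def SS (F : ℝ → ℝ → ℝ) : Prop :=
  ContDiffOn ℝ (⊤ : ℕ∞) (fun p : ℝ × ℝ => F p.1 p.2) (Ioi 0 ×ˢ univ)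

def Dx (F : ℝ → ℝ → ℝ) : ℝ → ℝ → ℝ := fun t x => deriv (F t) x
def Dt (F : ℝ → ℝ → ℝ) : ℝ → ℝ → ℝ := fun t x => deriv (fun s => F s x) t

def Per (F : ℝ → ℝ → ℝ) : Prop := ∀ t, 0 < t → ∀ x, F t (x + 2 * π) = F t x

lemma isOpenU : IsOpen ((Ioi (0:ℝ)) ×ˢ (univ : Set ℝ)) := isOpen_Ioi.prod isOpen_univ

lemma SS.cda {F : ℝ → ℝ → ℝ} (hF : SS F) {t : ℝ} (ht : 0 < t) (x : ℝ) :
    ContDiffAt ℝ (⊤ : ℕ∞) (fun p : ℝ × ℝ => F p.1 p.2) (t, x) :=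
  ContDiffOn.contDiffAt hF (isOpenU.mem_nhds ⟨ht, mem_univ _⟩)

lemma SS.hfd {F : ℝ → ℝ → ℝ} (hF : SS F) {t : ℝ} (ht : 0 < t) (x : ℝ) :
    HasFDerivAt (fun p : ℝ × ℝ => F p.1 p.2) (fderiv ℝ (fun p : ℝ × ℝ => F p.1 p.2) (t, x)) (t, x) :=
  ((hF.cda ht x).differentiableAt (by simp)).hasFDerivAt

lemma SS.hx' {F : ℝ → ℝ → ℝ} (hF : SS F) {t : ℝ} (ht : 0 < t) (x : ℝ) :
    HasDerivAt (F t) (fderiv ℝ (fun p : ℝ × ℝ => F p.1 p.2) (t, x) (0, 1)) x := by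
  have h1 : HasDerivAt (fun y : ℝ => (t, y)) ((0 : ℝ), (1 : ℝ)) x :=
    (hasDerivAt_const x t).prodMk (hasDerivAt_id x)
  exact (hF.hfd ht x).comp_hasDerivAt x h1

lemma SS.ht' {F : ℝ → ℝ → ℝ} (hF : SS F) {t : ℝ} (ht : 0 < t) (x : ℝ) :
    HasDerivAt (fun s => F s x) (fderiv ℝ (fun p : ℝ × ℝ => F p.1 p.2) (t, x) (1, 0)) t := by
  have h1 : HasDerivAt (fun y : ℝ => (y, x)) ((1 : ℝ), (0 : ℝ)) t :=
    (hasDerivAt_id t).prodMk (hasDerivAt_const t x)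
  exact (hF.hfd ht x).comp_hasDerivAt t h1

lemma SS.dx_eq {F : ℝ → ℝ → ℝ} (hF : SS F) {t : ℝ} (ht : 0 < t) (x : ℝ) :
    Dx F t x = fderiv ℝ (fun p : ℝ × ℝ => F p.1 p.2) (t, x) (0, 1) := (hF.hx' ht x).deriv

lemma SS.dt_eq {F : ℝ → ℝ → ℝ} (hF : SS F) {t : ℝ} (ht : 0 < t) (x : ℝ) :
    Dt F t x = fderiv ℝ (fun p : ℝ × ℝ => F p.1 p.2) (t, x) (1, 0) := (hF.ht' ht x).deriv

lemma SS.hx {F : ℝ → ℝ → ℝ} (hF : SS F) {t : ℝ} (ht : 0 < t) (x : ℝ) :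
    HasDerivAt (F t) (Dx F t x) x := by
  rw [hF.dx_eq ht]; exact hF.hx' ht x

lemma SS.ht {F : ℝ → ℝ → ℝ} (hF : SS F) {t : ℝ} (ht : 0 < t) (x : ℝ) :
    HasDerivAt (fun s => F s x) (Dt F t x) t := by
  rw [hF.dt_eq ht]; exact hF.ht' ht x

lemma SS.fd {F : ℝ → ℝ → ℝ} (hF : SS F) :
    ContDiffOn ℝ (⊤ : ℕ∞) (fderiv ℝ (fun p : ℝ × ℝ => F p.1 p.2)) (Ioi 0 ×ˢ univ) :=
  ContDiffOn.fderiv_of_isOpen hF isOpenU (by simp)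

lemma SS.dx {F : ℝ → ℝ → ℝ} (hF : SS F) : SS (Dx F) := by
  have := hF.fd.clm_apply (contDiffOn_const (c := ((0 : ℝ), (1 : ℝ))))
  exact this.congr fun p hp => hF.dx_eq hp.1 p.2

lemma SS.dt {F : ℝ → ℝ → ℝ} (hF : SS F) : SS (Dt F) := by
  have := hF.fd.clm_apply (contDiffOn_const (c := ((1 : ℝ), (0 : ℝ))))
  exact this.congr fun p hp => hF.dt_eq hp.1 p.2

lemma SS.comm {F : ℝ → ℝ → ℝ} (hF : SS F) {t : ℝ} (ht : 0 < t) (x : ℝ) :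
    Dt (Dx F) t x = Dx (Dt F) t x := by
  have hs := (hF.cda ht x).isSymmSndFDerivAt (by
    rw [minSmoothness_of_isRCLikeNormedField]
    exact WithTop.coe_le_coe.2 (le_top : (2 : ℕ∞) ≤ ⊤))
  have hd : HasFDerivAt (fderiv ℝ (fun p : ℝ × ℝ => F p.1 p.2))
      (fderiv ℝ (fderiv ℝ (fun p : ℝ × ℝ => F p.1 p.2)) (t, x)) (t, x) :=
    ((hF.fd.contDiffAt (x := (t, x)) (isOpenU.mem_nhds ⟨ht, mem_univ _⟩)).differentiableAt (by simp)).hasFDerivAt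
  have h1 : HasDerivAt (fun y : ℝ => (y, x)) ((1 : ℝ), (0 : ℝ)) t :=
    (hasDerivAt_id t).prodMk (hasDerivAt_const t x)
  have h2 : HasDerivAt (fun y : ℝ => (t, y)) ((0 : ℝ), (1 : ℝ)) x :=
    (hasDerivAt_const x t).prodMk (hasDerivAt_id x)
  have e1 : HasDerivAt (fun s => fderiv ℝ (fun p : ℝ × ℝ => F p.1 p.2) (s, x) (0, 1))
      (fderiv ℝ (fderiv ℝ (fun p : ℝ × ℝ => F p.1 p.2)) (t, x) (1, 0) (0, 1)) t :=
    (ContinuousLinearMap.apply ℝ ℝ ((0 : ℝ), (1 : ℝ))).hasFDerivAt.comp_hasDerivAt t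
      (hd.comp_hasDerivAt t h1)
  have e2 : HasDerivAt (fun y => fderiv ℝ (fun p : ℝ × ℝ => F p.1 p.2) (t, y) (1, 0))
      (fderiv ℝ (fderiv ℝ (fun p : ℝ × ℝ => F p.1 p.2)) (t, x) (0, 1) (1, 0)) x :=
    (ContinuousLinearMap.apply ℝ ℝ ((1 : ℝ), (0 : ℝ))).hasFDerivAt.comp_hasDerivAt x
      (hd.comp_hasDerivAt x h2)
  have f1 := e1.congr_of_eventuallyEq (f₁ := fun s => Dx F s x) (by
    filter_upwards [isOpen_Ioi.mem_nhds ht] with s hs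
    exact hF.dx_eq hs x)
  have f2 := e2.congr_of_eventuallyEq (f₁ := fun y => Dt F t y) (by
    filter_upwards with y
    exact hF.dt_eq ht y)
  have g1 : Dt (Dx F) t x = _ := f1.deriv
  have g2 : Dx (Dt F) t x = _ := f2.deriv
  rw [g1, g2]
  exact hs (1, 0) (0, 1)

lemma SS.mul {F G : ℝ → ℝ → ℝ} (hF : SS F) (hG : SS G) : SS (fun t x => F t x * G t x) :=
  ContDiffOn.mul hF hG
lemma SS.add {F G : ℝ → ℝ → ℝ} (hF : SS F) (hG : SS G) : SS (fun t x => F t x + G t x) :=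
  ContDiffOn.add hF hG
lemma SS.sub {F G : ℝ → ℝ → ℝ} (hF : SS F) (hG : SS G) : SS (fun t x => F t x - G t x) :=
  ContDiffOn.sub hF hG
lemma SS.pow {F : ℝ → ℝ → ℝ} (hF : SS F) (n : ℕ) : SS (fun t x => F t x ^ n) :=
  ContDiffOn.pow hF n
lemma SS.const (c : ℝ) : SS (fun _ _ => c) := contDiffOn_const

lemma Per.dx {F : ℝ → ℝ → ℝ} (hF : Per F) : Per (Dx F) := by
  intro t ht x
  have : (fun y => F t (y + 2 * π)) = F t := funext fun y => hF t ht y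
  have h2 := deriv_comp_add_const (f := F t) (2 * π) x
  rw [this] at h2
  exact h2.symm

lemma Per.dt {F : ℝ → ℝ → ℝ} (hF : Per F) : Per (Dt F) := by
  intro t ht x
  apply Filter.EventuallyEq.deriv_eq
  filter_upwards [isOpen_Ioi.mem_nhds ht] with s hs
  exact hF s hs x

lemma SS.cont {F : ℝ → ℝ → ℝ} (hF : SS F) {t : ℝ} (ht : 0 < t) : Continuous (F t) :=
  continuous_iff_continuousAt.2 fun x => (hF.hx ht x).continuousAt

lemma SS.ii {F : ℝ → ℝ → ℝ} (hF : SS F) {t : ℝ} (ht : 0 < t) (a b : ℝ) :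
    IntervalIntegrable (F t) volume a b := (hF.cont ht).intervalIntegrable a b

lemma SS.int_dx {F : ℝ → ℝ → ℝ} (hF : SS F) (hP : Per F) {t : ℝ} (ht : 0 < t) :
    ∫ x in (-π)..π, Dx F t x = 0 := by
  rw [intervalIntegral.integral_eq_sub_of_hasDerivAt (fun x _ => hF.hx ht x) (hF.dx.ii ht _ _)]
  have := hP t ht (-π)
  rw [show -π + 2 * π = π by ring] at this
  rw [this, sub_self]

lemma SS.int_dt {F : ℝ → ℝ → ℝ} (hF : SS F) {t : ℝ} (ht : 0 < t) :
    HasDerivAt (fun s => ∫ x in (-π)..π, F s x) (∫ x in (-π)..π, Dt F t x) t := by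
  have hK : IsCompact (Icc (t/2) (2*t) ×ˢ Icc (-π) π) := isCompact_Icc.prod isCompact_Icc
  have hc : ContinuousOn (fun p : ℝ × ℝ => Dt F p.1 p.2) (Icc (t/2) (2*t) ×ˢ Icc (-π) π) :=
    (ContDiffOn.continuousOn hF.dt).mono fun p hp => ⟨lt_of_lt_of_le (by positivity) hp.1.1, mem_univ _⟩
  obtain ⟨C, hC⟩ := hK.exists_bound_of_continuousOn hc
  have hle : -π ≤ π := by linarith [pi_pos]
  refine (intervalIntegral.hasDerivAt_integral_of_dominated_loc_of_deriv_le
    (F := F) (F' := Dt F) (bound := fun _ => C) (s := Ioo (t/2) (2*t))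
    (Ioo_mem_nhds (by linarith) (by linarith)) ?_ (hF.ii ht _ _) ?_ ?_ ?_ ?_).2
  · filter_upwards [isOpen_Ioi.mem_nhds ht] with s hs
    exact (hF.cont hs).aestronglyMeasurable
  · exact (hF.dt.cont ht).aestronglyMeasurable
  · filter_upwards with x hx s hs
    rw [uIoc_of_le hle] at hx
    exact hC (s, x) ⟨Ioo_subset_Icc_self hs, Ioc_subset_Icc_self hx⟩
  · exact intervalIntegrable_const
  · filter_upwards with x hx s hs
    exact hF.ht (lt_trans (by positivity) hs.1) x

/-- second derivative test at a maximum -/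
lemma max_test {f f1 : ℝ → ℝ} {f2 x : ℝ} (h1 : ∀ y, HasDerivAt f (f1 y) y)
    (h2 : HasDerivAt f1 f2 x) (hm : ∀ y, f y ≤ f x) : f2 ≤ 0 := by
  by_contra hc
  push Not at hc
  have e : deriv f = f1 := funext fun y => (h1 y).deriv
  have hmax : IsLocalMax f x := Eventually.of_forall hm
  have hmin : IsLocalMin f x := isLocalMin_of_deriv_deriv_pos (by rw [e, h2.deriv]; exact hc)
    hmax.deriv_eq_zero (h1 x).continuousAt
  have heq : f =ᶠ[nhds x] fun _ => f x := by
    filter_upwards [hmin] with y hy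
    exact le_antisymm (hm y) hy
  have := heq.deriv
  rw [e] at this
  have h3 := this.deriv_eq
  rw [h2.deriv] at h3
  simp at h3
  linarith

/-- the ODE argument -/
lemma ode {E D : ℝ → ℝ} {K : ℝ} (hE : ∀ t, 0 < t → HasDerivAt E (-D t) t)
    (hE0 : ∀ t, 0 < t → 0 ≤ E t) (hD0 : ∀ t, 0 < t → 0 ≤ D t) (D' : ℝ → ℝ)
    (hD : ∀ t, 0 < t → HasDerivAt D (D' t) t) (hDK : ∀ t, 0 < t → D' t ≤ K * D t) (hK : 0 ≤ K)
    (η : ℝ) (hη : 0 < η) : ∃ T : ℝ, 0 < T ∧ ∀ t, T ≤ t → D t ≤ η := by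
  have hanti : ∀ s t, 0 < s → s ≤ t → E t ≤ E s := by
    intro s t hs hst
    have : AntitoneOn E (Ioi 0) := by
      apply antitoneOn_of_deriv_nonpos (convex_Ioi 0)
      · exact fun t ht => (hE t ht).continuousAt.continuousWithinAt
      · intro t ht; rw [interior_Ioi] at ht; exact (hE t ht).differentiableAt.differentiableWithinAt
      · intro t ht; rw [interior_Ioi] at ht; rw [(hE t ht).deriv]; linarith [hD0 t ht]
    exact this hs (lt_of_lt_of_le hs hst) hst
  have hexp : ∀ s t, 0 < s → s ≤ t → D t * exp (-K * t) ≤ D s * exp (-K * s) := by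
    intro s t hs hst
    have hd : ∀ t, 0 < t → HasDerivAt (fun t => D t * exp (-K * t))
        (D' t * exp (-K * t) + D t * (exp (-K * t) * (-K))) t := by
      intro t ht
      have := ((hasDerivAt_id t).const_mul (-K)).exp
      simp only [id, mul_one] at this
      exact (hD t ht).mul this
    have : AntitoneOn (fun t => D t * exp (-K * t)) (Ioi 0) := by
      apply antitoneOn_of_deriv_nonpos (convex_Ioi 0)
      · exact fun t ht => (hd t ht).continuousAt.continuousWithinAt
      · intro t ht; rw [interior_Ioi] at ht; exact (hd t ht).differentiableAt.differentiableWithinAt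
      · intro t ht
        rw [interior_Ioi] at ht
        rw [(hd t ht).deriv]
        nlinarith [hDK t ht, exp_pos (-K * t)]
    exact this hs (lt_of_lt_of_le hs hst) hst
  have hA : Antitone (fun n : ℕ => E (n + 1)) := by
    intro m n hmn
    apply hanti
    · positivity
    · have : (m : ℝ) ≤ n := by exact_mod_cast hmn
      linarith
  have hlim := tendsto_atTop_ciInf hA ⟨0, by rintro _ ⟨n, rfl⟩; exact hE0 _ (by positivity)⟩
  set l := ⨅ n : ℕ, E (n + 1) with hl
  have hlow : ∀ t, 0 < t → l ≤ E t := by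
    intro t ht
    obtain ⟨n, hn⟩ := exists_nat_ge t
    have h1 : l ≤ E (n + 1) := hA.le_of_tendsto hlim n
    exact h1.trans (hanti t _ ht (by linarith))
  have hη' : 0 < η * exp (-K) := by positivity
  have hev : ∀ᶠ n : ℕ in atTop, E (n + 1) < l + η * exp (-K) :=
    hlim.eventually (gt_mem_nhds (by linarith))
  obtain ⟨n, hn⟩ := hev.exists
  refine ⟨n + 2, by positivity, fun t ht => ?_⟩
  have hn0 : (0 : ℝ) ≤ n := by positivity
  obtain ⟨s, hs, hse⟩ := exists_hasDerivAt_eq_slope E (fun t => -D t) (show t - 1 < t by linarith)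
    (fun r hr => (hE r (by linarith [hr.1])).continuousAt.continuousWithinAt)
    (fun r hr => hE r (by linarith [hr.1]))
  have hs0 : 0 < s := by linarith [hs.1]
  have h1 := hexp s t hs0 hs.2.le
  have h2 : D s = E (t - 1) - E t := by
    have : t - (t - 1) = 1 := by ring
    rw [this] at hse
    linarith
  have h3 := hlow t (by linarith)
  have h4 := hanti (n + 1) (t - 1) (by positivity) (by linarith)
  have h5 : D s ≤ η * exp (-K) := by linarith
  have h6 : exp (-K * s) ≤ exp (-K * t) * exp K := by
    rw [← Real.exp_add]
    apply Real.exp_le_exp.2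
    nlinarith [hs.1]
  have h7 : exp (-K) * exp K = 1 := by rw [← Real.exp_add]; simp
  have h8 : D t * exp (-K * t) ≤ η * exp (-K * t) :=
    calc D t * exp (-K * t) ≤ D s * exp (-K * s) := h1
      _ ≤ (η * exp (-K)) * (exp (-K * t) * exp K) :=
        mul_le_mul h5 h6 (exp_pos _).le hη'.le
      _ = η * exp (-K * t) * (exp (-K) * exp K) := by ring
      _ = _ := by rw [h7, mul_one]
  exact le_of_mul_le_mul_right h8 (exp_pos _)

lemma Per.ii_neg {F : ℝ → ℝ → ℝ} {c : ℝ} (hF : ∀ t, 0 < t → ∀ x, F t (-x) = c * F t x) :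
    ∀ t, 0 < t → ∀ x, Dx F t (-x) = (-c) * Dx F t x := by
  intro t ht x
  have : (fun y => F t (-y)) = fun y => c * F t y := funext fun y => hF t ht y
  have h2 := deriv_comp_neg (f := F t) x
  rw [this] at h2
  rw [deriv_const_mul_field] at h2
  simp only [Dx]
  linarith

/-- Proposition 5.3, Eq. (5.3): for a smooth `2π`-periodic solution of
`∂_t h = ∂_x((∂_x h)³ − ∂_x h) − ν∂_x⁴h` on `[0,∞) × 𝕋` that is even in `x` and has
mean-zero initial data, `limsup_{t→∞} ‖∂_x h(t,·)‖_∞ ≤ 1`; equivalently, for every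
`ε > 0` there is `T` with `|∂_x h(t,x)| ≤ 1 + ε` for all `t ≥ T` and all `x`. -/
theorem stmt17 (ν : ℝ) (hν : 0 < ν) (h : ℝ → ℝ → ℝ)
    (hsmooth : ContDiffOn ℝ (⊤ : ℕ∞) (fun p : ℝ × ℝ => h p.1 p.2) (Ici 0 ×ˢ univ))
    (hper : ∀ t ∈ Ici (0 : ℝ), Function.Periodic (h t) (2 * Real.pi))
    (heven : ∀ t ∈ Ici (0 : ℝ), ∀ x : ℝ, h t (-x) = h t x)
    (hmean : (∫ x in Icc (-Real.pi) Real.pi, h 0 x) = 0)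
    (hpde : ∀ (x : ℝ), ∀ t ∈ Ici (0 : ℝ),
      HasDerivWithinAt (fun s => h s x)
        (deriv (fun y => (deriv (h t) y) ^ 3 - deriv (h t) y) x
          - ν * iteratedDeriv 4 (h t) x) (Ici 0) t) :
    ∀ ε : ℝ, 0 < ε → ∃ T : ℝ, ∀ t : ℝ, T ≤ t → ∀ x : ℝ, |deriv (h t) x| ≤ 1 + ε := by
  have Sh : SS h := hsmooth.mono (prod_mono Ioi_subset_Ici_self subset_rfl)
  have Ph : Per h := fun t ht x => hper t (le_of_lt ht) x
  obtain ⟨u, hu⟩ : ∃ u, u = Dx h := ⟨_, rfl⟩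
  obtain ⟨ux, hux⟩ : ∃ ux, ux = Dx u := ⟨_, rfl⟩
  obtain ⟨uxx, huxx⟩ : ∃ uxx, uxx = Dx ux := ⟨_, rfl⟩
  obtain ⟨g, hg⟩ : ∃ g, g = Dt h := ⟨_, rfl⟩
  obtain ⟨gx, hgx⟩ : ∃ gx, gx = Dx g := ⟨_, rfl⟩
  obtain ⟨gxx, hgxx⟩ : ∃ gxx, gxx = Dx gx := ⟨_, rfl⟩
  obtain ⟨gxxx, hgxxx⟩ : ∃ gxxx, gxxx = Dx gxx := ⟨_, rfl⟩
  obtain ⟨m, hm⟩ : ∃ m : ℝ → ℝ → ℝ, m = fun t x => u t x ^ 3 - u t x - ν * uxx t x := ⟨_, rfl⟩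
  obtain ⟨M, hM⟩ : ∃ M, M = Dt m := ⟨_, rfl⟩
  have Su : SS u := hu ▸ Sh.dx
  have Sux : SS ux := hux ▸ Su.dx
  have Suxx : SS uxx := huxx ▸ Sux.dx
  have Sg : SS g := hg ▸ Sh.dt
  have Sgx : SS gx := hgx ▸ Sg.dx
  have Sgxx : SS gxx := hgxx ▸ Sgx.dx
  have Sm : SS m := by
    rw [hm]; exact ((Su.pow 3).sub Su).sub ((SS.const ν).mul Suxx)
  have SM : SS M := hM ▸ Sm.dt
  have Pu : Per u := hu ▸ Ph.dx
  have Pux : Per ux := hux ▸ Pu.dx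
  have Puxx : Per uxx := huxx ▸ Pux.dx
  have Pg : Per g := hg ▸ Ph.dt
  have Pgx : Per gx := hgx ▸ Pg.dx
  have Pgxx : Per gxx := hgxx ▸ Pgx.dx
  have Pm : Per m := by
    intro t ht x
    simp only [hm, Pu t ht x, Puxx t ht x]
  have PM : Per M := hM ▸ Pm.dt
  -- x-derivatives
  have ux_d : ∀ t, 0 < t → ∀ x, HasDerivAt (u t) (ux t x) x := fun t ht x => hux ▸ Su.hx ht x
  have uxx_d : ∀ t, 0 < t → ∀ x, HasDerivAt (ux t) (uxx t x) x := fun t ht x => huxx ▸ Sux.hx ht x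
  have gx_d : ∀ t, 0 < t → ∀ x, HasDerivAt (g t) (gx t x) x := fun t ht x => hgx ▸ Sg.hx ht x
  have gxx_d : ∀ t, 0 < t → ∀ x, HasDerivAt (gx t) (gxx t x) x := fun t ht x => hgxx ▸ Sgx.hx ht x
  have gxxx_d : ∀ t, 0 < t → ∀ x, HasDerivAt (gxx t) (gxxx t x) x :=
    fun t ht x => hgxxx ▸ Sgxx.hx ht x
  -- the equation
  have hgm : ∀ t, 0 < t → ∀ x, Dx m t x = g t x := by
    intro t ht x
    have h1 := (hpde x t (le_of_lt ht)).hasDerivAt (Ici_mem_nhds ht)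
    have h2 : HasDerivAt (fun y => u t y ^ 3 - u t y)
        (deriv (fun y => (deriv (h t) y) ^ 3 - deriv (h t) y) x) x := by
      rw [hu]
      rw [hu] at ux_d
      exact (((ux_d t ht x).pow 3).sub (ux_d t ht x)).differentiableAt.hasDerivAt
    have h3 : HasDerivAt (uxx t) (iteratedDeriv 4 (h t) x) x := by
      have h4 : iteratedDeriv 4 (h t) x = Dx uxx t x := by
        simp only [iteratedDeriv_succ, iteratedDeriv_zero, huxx, hux, hu]
        rfl
      rw [h4]
      exact Suxx.hx ht x
    have h4 := h2.sub (h3.const_mul ν)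
    have h5 : Dx m t x = _ := (congrArg (fun F => Dx F t x) hm).trans h4.deriv
    rw [h5, hg]
    exact h1.deriv.symm
  have m_d : ∀ t, 0 < t → ∀ x, HasDerivAt (m t) (g t x) x := fun t ht x => by
    rw [← hgm t ht x]; exact Sm.hx ht x
  -- t-derivatives
  have u_t : ∀ t, 0 < t → ∀ x, HasDerivAt (fun s => u s x) (gx t x) t := by
    intro t ht x
    have := Su.ht ht x
    rw [hgx, hg, ← Sh.comm ht x, ← hu]
    exact this
  have ux_t : ∀ t, 0 < t → ∀ x, HasDerivAt (fun s => ux s x) (gxx t x) t := by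
    intro t ht x
    have h1 := Sux.ht ht x
    have h2 : Dt u t = gx t := funext fun y => (u_t t ht y).deriv
    have h3 : Dt ux t x = gxx t x := by
      rw [hux, Su.comm ht x, hgxx]
      simp only [Dx, h2]
    rwa [h3] at h1
  have uxx_t : ∀ t, 0 < t → ∀ x, HasDerivAt (fun s => uxx s x) (gxxx t x) t := by
    intro t ht x
    have h1 := Suxx.ht ht x
    have h2 : Dt ux t = gxx t := funext fun y => (ux_t t ht y).deriv
    have h3 : Dt uxx t x = gxxx t x := by
      rw [huxx, Sux.comm ht x, hgxxx]
      simp only [Dx, h2]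
    rwa [h3] at h1
  have hMeq : ∀ t, 0 < t → ∀ x, M t x = (3 * u t x ^ 2 - 1) * gx t x - ν * gxxx t x := by
    intro t ht x
    have h1 := (((u_t t ht x).pow 3).sub (u_t t ht x)).sub ((uxx_t t ht x).const_mul ν)
    have h2 : M t x = _ := (congrArg (fun F => F t x) hM).trans
      ((congrArg (fun F => Dt F t x) hm).trans h1.deriv)
    rw [h2]
    push_cast
    ring
  have g_t : ∀ t, 0 < t → ∀ x, HasDerivAt (fun s => g s x) (Dx M t x) t := by
    intro t ht x
    have h1 := Sm.dx.ht ht x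
    rw [Sm.comm ht x, ← hM] at h1
    refine h1.congr_of_eventuallyEq ?_
    filter_upwards [isOpen_Ioi.mem_nhds ht] with s hs
    exact (hgm s hs x).symm
  -- energy
  obtain ⟨e, he⟩ : ∃ e : ℝ → ℝ → ℝ, e = fun t x => ν / 2 * ux t x ^ 2 +
    1 / 4 * (u t x ^ 2 - 1) ^ 2 := ⟨_, rfl⟩
  have Se : SS e := by
    rw [he]
    exact ((SS.const _).mul (Sux.pow 2)).add ((SS.const _).mul (((Su.pow 2).sub (SS.const 1)).pow 2))
  obtain ⟨P, hP⟩ : ∃ P : ℝ → ℝ → ℝ, P = fun t x => ν * (ux t x * gx t x) + m t x * g t x := ⟨_, rfl⟩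
  have SP : SS P := by
    rw [hP]
    exact ((SS.const _).mul (Sux.mul Sgx)).add (Sm.mul Sg)
  have PP : Per P := by
    intro t ht x
    simp only [hP, Pux t ht x, Pgx t ht x, Pm t ht x, Pg t ht x]
  have het : ∀ t, 0 < t → ∀ x, Dt e t x = Dx P t x - g t x ^ 2 := by
    intro t ht x
    have h1 := (((ux_t t ht x).pow 2).const_mul (ν / 2)).add
      (((((u_t t ht x).pow 2).sub_const 1).pow 2).const_mul (1 / 4))
    have h2 : Dt e t x = _ := (congrArg (fun F => Dt F t x) he).trans h1.deriv
    have h3 := (((uxx_d t ht x).mul (gxx_d t ht x)).const_mul ν).add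
      ((m_d t ht x).mul (gx_d t ht x))
    have h4 : Dx P t x = _ := (congrArg (fun F => Dx F t x) hP).trans h3.deriv
    rw [h2, h4, hm]
    simp
    ring
  obtain ⟨Q, hQ⟩ : ∃ Q : ℝ → ℝ → ℝ, Q = fun t x => 2 * (g t x * M t x) +
    2 * ν * (gx t x * gxx t x) + 2 * (g t x * gx t x) := ⟨_, rfl⟩
  have SQ : SS Q := by
    rw [hQ]
    exact (((SS.const _).mul (Sg.mul SM)).add ((SS.const _).mul (Sgx.mul Sgxx))).add
      ((SS.const _).mul (Sg.mul Sgx))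
  have PQ : Per Q := by
    intro t ht x
    simp only [hQ, PM t ht x, Pgx t ht x, Pgxx t ht x, Pg t ht x]
  have Sg2 : SS (fun t x => g t x ^ 2) := Sg.pow 2
  have hg2t : ∀ t, 0 < t → ∀ x,
      Dt (fun t x => g t x ^ 2) t x ≤ Dx Q t x + 1 / (2 * ν) * g t x ^ 2 := by
    intro t ht x
    have h1 := (g_t t ht x).pow 2
    have h2 : Dt (fun t x => g t x ^ 2) t x = _ := h1.deriv
    have hMx : HasDerivAt (M t) (Dx M t x) x := SM.hx ht x
    have h3 := ((((gx_d t ht x).mul hMx).const_mul 2).add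
      (((gxx_d t ht x).mul (gxxx_d t ht x)).const_mul (2 * ν))).add
      (((gx_d t ht x).mul (gxx_d t ht x)).const_mul 2)
    have h4 : Dx Q t x = _ := (congrArg (fun F => Dx F t x) hQ).trans h3.deriv
    rw [h2, h4, hMeq t ht x]
    have h5 : 1 / (2 * ν) * g t x ^ 2 + 2 * g t x * gxx t x + 2 * ν * gxx t x ^ 2
        = 1 / (2 * ν) * (g t x + 2 * ν * gxx t x) ^ 2 := by
      field_simp
      ring
    have h6 : 0 ≤ 1 / (2 * ν) * (g t x + 2 * ν * gxx t x) ^ 2 := by positivity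
    have h7 : 0 ≤ (u t x * gx t x) ^ 2 := sq_nonneg _
    rw [← h5] at h6
    push_cast
    simp only [Nat.add_one_sub_one, pow_one]
    nlinarith
  have hle : -π ≤ π := by linarith [pi_pos]
  have key := ode (E := fun t => ∫ x in (-π)..π, e t x) (D := fun t => ∫ x in (-π)..π, g t x ^ 2)
    (K := 1 / (2 * ν)) (by
      intro t ht
      have h1 := Se.int_dt ht
      have h2 : ∫ x in (-π)..π, Dt e t x = - ∫ x in (-π)..π, g t x ^ 2 := by
        simp only [het t ht]
        rw [intervalIntegral.integral_sub (SP.dx.ii ht _ _) (Sg2.ii ht _ _), SP.int_dx PP ht]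
        ring
      rwa [h2] at h1)
    (by
      intro t ht
      apply intervalIntegral.integral_nonneg hle
      intro x _
      rw [he]
      positivity)
    (by
      intro t ht
      apply intervalIntegral.integral_nonneg hle
      intro x _
      positivity)
    (fun t => ∫ x in (-π)..π, Dt (fun t x => g t x ^ 2) t x)
    (fun t ht => Sg2.int_dt ht)
    (by
      intro t ht
      have h1 := intervalIntegral.integral_mono_on hle (Sg2.dt.ii ht _ _)
        ((SQ.dx.ii ht _ _).add ((Sg2.ii ht _ _).const_mul (1 / (2 * ν)))) (fun x _ => hg2t t ht x)
      rw [intervalIntegral.integral_add (SQ.dx.ii ht _ _) ((Sg2.ii ht _ _).const_mul (1 / (2 * ν))),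
        SQ.int_dx PQ ht, intervalIntegral.integral_const_mul, zero_add] at h1
      exact h1)
    (by positivity)
  intro ε hε
  obtain ⟨δ, hδ⟩ : ∃ δ, δ = ε / π := ⟨_, rfl⟩
  have hδ0 : 0 < δ := by rw [hδ]; positivity
  obtain ⟨T, hT0, hT⟩ := key (2 * δ * ε) (by positivity)
  refine ⟨T, fun t htT => ?_⟩
  have ht : 0 < t := lt_of_lt_of_le hT0 htT
  have hD := hT t htT
  -- parity
  have p0 : ∀ t, 0 < t → ∀ x, h t (-x) = 1 * h t x := fun t ht x => by
    rw [one_mul]; exact heven t (le_of_lt ht) x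
  have p1 := Per.ii_neg p0
  rw [← hu] at p1
  have p2 := Per.ii_neg p1
  rw [← hux] at p2
  have p3 := Per.ii_neg p2
  rw [← huxx] at p3
  have m0 : m t 0 = 0 := by
    have a1 := p1 t ht 0
    have a3 := p3 t ht 0
    rw [neg_zero] at a1 a3
    have b1 : u t 0 = 0 := by linarith
    have b3 : uxx t 0 = 0 := by linarith
    simp [hm, b1, b3]
  have mbound : ∀ x ∈ Icc (-π) π, m t x ≤ 2 * ε := by
    intro x hx
    have h1 := intervalIntegral.integral_eq_sub_of_hasDerivAt (a := 0) (b := x)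
      (fun y _ => m_d t ht y) (Sg.ii ht _ _)
    rw [m0, sub_zero] at h1
    rw [← h1]
    have Cg := Sg.cont ht
    calc ∫ y in (0:ℝ)..x, g t y ≤ ‖∫ y in (0:ℝ)..x, g t y‖ := le_abs_self _
      _ ≤ ∫ y in uIoc 0 x, ‖g t y‖ := intervalIntegral.norm_integral_le_integral_norm_uIoc
      _ ≤ ∫ y in Ioc (-π) π, ‖g t y‖ := by
        apply setIntegral_mono_set
        · have := (Cg.norm.intervalIntegrable (μ := volume) (-π) π)
          rwa [intervalIntegrable_iff_integrableOn_Ioc_of_le hle] at this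
        · exact Eventually.of_forall fun y => norm_nonneg _
        · apply HasSubset.Subset.eventuallyLE
          intro y hy
          rw [mem_uIoc] at hy
          constructor <;> rcases hy with hy | hy <;> linarith [hx.1, hx.2, hy.1, hy.2, pi_pos]
      _ = ∫ y in (-π)..π, ‖g t y‖ := (intervalIntegral.integral_of_le hle).symm
      _ ≤ ∫ y in (-π)..π, (δ / 2 + 1 / (2 * δ) * g t y ^ 2) := by
        apply intervalIntegral.integral_mono_on hle (Cg.norm.intervalIntegrable _ _)
          (intervalIntegrable_const.add ((Sg2.ii ht _ _).const_mul _))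
        intro y _
        have h5 : δ / 2 + 1 / (2 * δ) * g t y ^ 2 - |g t y| = 1 / (2 * δ) * (|g t y| - δ) ^ 2 := by
          rw [← sq_abs (g t y)]
          field_simp
          ring
        have h6 : 0 ≤ 1 / (2 * δ) * (|g t y| - δ) ^ 2 := by positivity
        rw [Real.norm_eq_abs]
        linarith
      _ = π * δ + 1 / (2 * δ) * ∫ y in (-π)..π, g t y ^ 2 := by
        rw [intervalIntegral.integral_add intervalIntegrable_const ((Sg2.ii ht _ _).const_mul _),
          intervalIntegral.integral_const_mul, intervalIntegral.integral_const, smul_eq_mul]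
        ring
      _ ≤ π * δ + 1 / (2 * δ) * (2 * δ * ε) := by gcongr
      _ = 2 * ε := by
        have : π * δ = ε := by rw [hδ]; field_simp
        rw [this]
        field_simp
        ring
  -- maximum
  have Cu := Su.cont ht
  obtain ⟨x0, hx0, hmax⟩ := isCompact_Icc.exists_isMaxOn (nonempty_Icc.2 hle) Cu.continuousOn
  have hmax' : ∀ y, u t y ≤ u t x0 := by
    intro y
    have hp : Function.Periodic (u t) (2 * π) := fun x => Pu t ht x
    obtain ⟨z, hz, hze⟩ := hp.exists_mem_Ico two_pi_pos y (-π)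
    rw [hze]
    exact hmax ⟨hz.1, by linarith [hz.2]⟩
  have hneg := max_test (ux_d t ht) (uxx_d t ht x0) hmax'
  have hmx := mbound x0 hx0
  have hu0 : u t x0 ≤ 1 + ε := by
    by_contra hc
    push Not at hc
    have h1 : m t x0 = u t x0 ^ 3 - u t x0 - ν * uxx t x0 := by rw [hm]
    have h2 : u t x0 ^ 3 - u t x0 ≤ 2 * ε := by nlinarith
    have h3 : 2 * ε < (u t x0 - 1) * (u t x0 * (u t x0 + 1)) := by
      have : 2 < u t x0 * (u t x0 + 1) := by nlinarith
      nlinarith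
    nlinarith
  intro x
  have hux' : deriv (h t) x = u t x := by rw [hu]; rfl
  rw [hux', abs_le]
  have h1 := hmax' x
  have h2 := hmax' (-x)
  rw [p1 t ht x] at h2
  constructor <;> linarith
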